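/- arXiv:2402.18111 — 3 statements merged into one kernel-verified Lean document; each statement's English description precedes it below -/
import Mathlib

section
/- There exists an absolute constant C > 0 such that for every (r, s) ∈ Π with r² + s² = 1 and every (r̄, s̄) ∈ Π with 0 < D ≤ 1/64, where D := (r − r̄)² + (s − s̄)², one has |F^r(r, s, r̄, s̄)| ≤ C · D^{−1/2}. -/
open MeasureTheory Real

/-- `X₋₋(r,s,r̄,s̄,θ̄,φ̄) = (r−r̄)² + (s−s̄)² + 2rr̄(1−cos θ̄) + 2ss̄(1−cos φ̄)`. -/
noncomputable def Xmm (r s rb sb θ φ : ℝ) : ℝ :=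
  (r - rb) ^ 2 + (s - sb) ^ 2 + 2 * r * rb * (1 - Real.cos θ) + 2 * s * sb * (1 - Real.cos φ)

/-- The Biot–Savart kernel `F^r` of the bi-rotational Euler flow:
`F^r(r,s,r̄,s̄) = (2/π²) ∫₀^π ∫₀^π r̄ s̄ cos θ̄ (s̄ − s cos φ̄) X₋₋^{−2} dφ̄ dθ̄`. -/
noncomputable def Fr (r s rb sb : ℝ) : ℝ :=
  (2 / Real.pi ^ 2) * ∫ θ in (0:ℝ)..Real.pi, ∫ φ in (0:ℝ)..Real.pi,
    rb * sb * Real.cos θ * (sb - s * Real.cos φ) / (Xmm r s rb sb θ φ) ^ 2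

/-- The elementary quadratic lower bound for the angular part of `X₋₋`. -/
lemma sq_le_angular_part {x y d θ : ℝ} (hx : 0 ≤ x) (hy : 0 ≤ y) (hd : 0 ≤ d)
    (hxy : |x - y| ≤ d) (hθ : 0 ≤ θ) (hθπ : θ ≤ π) :
    d ^ 2 + y ^ 2 * θ ^ 2 ≤ 50 * (d ^ 2 + 2 * x * y * (1 - Real.cos θ)) := by
  obtain ⟨h1, h2⟩ := abs_le.mp hxy
  have hπ : π ^ 2 ≤ 10 := by nlinarith [Real.pi_lt_d2, Real.pi_pos]
  have hcos : θ ^ 2 / 5 ≤ 1 - Real.cos θ := by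
    have h := Real.cos_le_one_sub_mul_cos_sq (x := θ) (by rwa [abs_of_nonneg hθ])
    have h5 : 1 / 5 ≤ 2 / π ^ 2 := by
      rw [div_le_div_iff₀ (by norm_num) (by positivity)]
      linarith
    nlinarith [mul_le_mul_of_nonneg_right h5 (sq_nonneg θ)]
  have hθ2 : θ ^ 2 ≤ 10 := le_trans (pow_le_pow_left₀ hθ hθπ 2) hπ
  have hxy0 : 0 ≤ x * y := mul_nonneg hx hy
  have key : x * y * θ ^ 2 / 5 ≤ x * y * (1 - Real.cos θ) := by
    have := mul_le_mul_of_nonneg_left hcos hxy0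
    linarith
  rcases le_total d x with h | h
  · have hy2 : y ^ 2 ≤ 2 * (x * y) := by nlinarith
    nlinarith [mul_le_mul_of_nonneg_right hy2 (sq_nonneg θ), sq_nonneg d,
      mul_nonneg hxy0 (sq_nonneg θ)]
  · have hy2 : y ^ 2 ≤ 4 * d ^ 2 := by nlinarith
    have : y ^ 2 * θ ^ 2 ≤ 4 * d ^ 2 * 10 :=
      mul_le_mul hy2 hθ2 (sq_nonneg θ) (by positivity)
    nlinarith [mul_nonneg hxy0 (sq_nonneg θ), sq_nonneg d]

lemma continuous_lorentzian (t : ℝ) : Continuous fun θ : ℝ => t / (1 + t ^ 2 * θ ^ 2) :=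
  continuous_const.div (by fun_prop) fun θ => by positivity

lemma integral_lorentzian_le (t b : ℝ) : ∫ θ in (0:ℝ)..b, t / (1 + t ^ 2 * θ ^ 2) ≤ 2 := by
  have hderiv (θ : ℝ) : HasDerivAt (fun x => Real.arctan (t * x)) (t / (1 + t ^ 2 * θ ^ 2)) θ := by
    have h := ((hasDerivAt_id' θ).const_mul t).arctan
    convert h using 1
    ring
  rw [intervalIntegral.integral_eq_sub_of_hasDerivAt (fun θ _ => hderiv θ)
    ((continuous_lorentzian t).intervalIntegrable _ _)]
  have := Real.arctan_lt_pi_div_two (t * b)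
  simp only [mul_zero, Real.arctan_zero, sub_zero]
  linarith [Real.pi_lt_d2]

lemma abs_kernel_le {r s rb sb d θ φ : ℝ} (hr : 0 ≤ r) (hs : 0 ≤ s) (hrb : 0 ≤ rb)
    (hsb : 0 ≤ sb) (hd : 0 < d) (hD : d ^ 2 = (r - rb) ^ 2 + (s - sb) ^ 2)
    (hθ : 0 ≤ θ) (hθπ : θ ≤ π) (hφ : 0 ≤ φ) (hφπ : φ ≤ π) :
    |rb * sb * Real.cos θ * (sb - s * Real.cos φ) / (Xmm r s rb sb θ φ) ^ 2| ≤
      d⁻¹ * ((rb / d) / (1 + (rb / d) ^ 2 * θ ^ 2)) *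
        (2500 * ((sb / d) / (1 + (sb / d) ^ 2 * φ ^ 2)) + 25) := by
  have hrd : |r - rb| ≤ d := abs_le_of_sq_le_sq (by nlinarith [sq_nonneg (s - sb)]) hd.le
  have hsd : |s - sb| ≤ d := abs_le_of_sq_le_sq (by nlinarith [sq_nonneg (r - rb)]) hd.le
  have hX₁ := sq_le_angular_part hr hrb hd.le hrd hθ hθπ
  have hX₂ := sq_le_angular_part hs hsb hd.le hsd hφ hφπ
  have hcφ : 0 ≤ 1 - Real.cos φ := sub_nonneg.mpr (Real.cos_le_one φ)
  have hp : 0 ≤ 2 * r * rb * (1 - Real.cos θ) :=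
    mul_nonneg (by positivity) (sub_nonneg.mpr (Real.cos_le_one θ))
  have hq : 0 ≤ 2 * s * sb * (1 - Real.cos φ) := mul_nonneg (by positivity) hcφ
  have hX : Xmm r s rb sb θ φ = d ^ 2 + 2 * r * rb * (1 - Real.cos θ)
      + 2 * s * sb * (1 - Real.cos φ) := by rw [Xmm, hD]
  set X := Xmm r s rb sb θ φ
  have hXpos : 0 < X := by rw [hX]; positivity
  have hA : 0 < d ^ 2 + rb ^ 2 * θ ^ 2 := by positivity
  have hB : 0 < d ^ 2 + sb ^ 2 * φ ^ 2 := by positivity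
  have hrX : rb / X ≤ 50 * (rb / (d ^ 2 + rb ^ 2 * θ ^ 2)) := by
    rw [← mul_div_assoc, div_le_div_iff₀ hXpos hA]
    nlinarith
  have hsX : sb / X ≤ 50 * (sb / (d ^ 2 + sb ^ 2 * φ ^ 2)) := by
    rw [← mul_div_assoc, div_le_div_iff₀ hXpos hB]
    nlinarith
  have hnum : |sb - s * Real.cos φ| ≤ d + s * (1 - Real.cos φ) := by
    rw [show sb - s * Real.cos φ = -(s - sb) + s * (1 - Real.cos φ) by ring]
    refine (abs_add_le _ _).trans ?_
    rw [abs_neg, abs_of_nonneg (mul_nonneg hs hcφ)]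
    linarith
  have hscale (y α : ℝ) : (y / d) / (1 + (y / d) ^ 2 * α ^ 2)
      = d * (y / (d ^ 2 + y ^ 2 * α ^ 2)) := by
    have : d ^ 2 + y ^ 2 * α ^ 2 ≠ 0 := by positivity
    have : 1 + (y / d) ^ 2 * α ^ 2 ≠ 0 := by positivity
    field_simp
  rw [hscale, hscale, abs_div, abs_mul, abs_mul, abs_of_nonneg (mul_nonneg hrb hsb),
    abs_of_pos (pow_pos hXpos 2)]
  calc rb * sb * |Real.cos θ| * |sb - s * Real.cos φ| / X ^ 2
      ≤ rb * sb * 1 * (d + s * (1 - Real.cos φ)) / X ^ 2 := by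
        have := Real.abs_cos_le_one θ
        gcongr
    _ = rb / X * (d * (sb / X) + sb * s * (1 - Real.cos φ) / X) := by
        field_simp
    _ ≤ 50 * (rb / (d ^ 2 + rb ^ 2 * θ ^ 2)) *
        (d * (50 * (sb / (d ^ 2 + sb ^ 2 * φ ^ 2))) + 1 / 2) := by
        have : sb * s * (1 - Real.cos φ) / X ≤ 1 / 2 := by
          rw [div_le_div_iff₀ hXpos two_pos]
          nlinarith [sq_nonneg d]
        have h0 : 0 ≤ sb * s * (1 - Real.cos φ) := by positivity
        gcongr
    _ = _ := by
        field_simp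
        ring

lemma abs_Fr_le {r s rb sb d : ℝ} (hr : 0 ≤ r) (hs : 0 ≤ s) (hrb : 0 ≤ rb)
    (hsb : 0 ≤ sb) (hd : 0 < d) (hD : d ^ 2 = (r - rb) ^ 2 + (s - sb) ^ 2) :
    |Fr r s rb sb| ≤ 10200 * d⁻¹ := by
  have hinner (θ : ℝ) (hθ : θ ∈ Set.Ioc 0 π) :
      ‖∫ φ in (0:ℝ)..π, rb * sb * Real.cos θ * (sb - s * Real.cos φ) / (Xmm r s rb sb θ φ) ^ 2‖
        ≤ 5100 * d⁻¹ * ((rb / d) / (1 + (rb / d) ^ 2 * θ ^ 2)) := by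
    refine (intervalIntegral.norm_integral_le_of_norm_le Real.pi_pos.le
      (g := fun φ => d⁻¹ * ((rb / d) / (1 + (rb / d) ^ 2 * θ ^ 2)) *
        (2500 * ((sb / d) / (1 + (sb / d) ^ 2 * φ ^ 2)) + 25))
      (Filter.Eventually.of_forall fun φ hφ => ?_) ?_).trans ?_
    · exact abs_kernel_le hr hs hrb hsb hd hD hθ.1.le hθ.2 hφ.1.le hφ.2
    · exact (((continuous_lorentzian _).const_mul _).add_const _ |>.const_mul _).intervalIntegrable
        _ _
    · rw [intervalIntegral.integral_const_mul, intervalIntegral.integral_add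
        (((continuous_lorentzian _).const_mul _).intervalIntegrable _ _) (by simp),
        intervalIntegral.integral_const_mul, intervalIntegral.integral_const]
      have h1 := integral_lorentzian_le (sb / d) π
      have h2 := Real.pi_lt_d2
      have h3 : 0 ≤ d⁻¹ * ((rb / d) / (1 + (rb / d) ^ 2 * θ ^ 2)) := by positivity
      rw [mul_assoc 5100, mul_comm 5100]
      refine mul_le_mul_of_nonneg_left ?_ h3
      simp only [smul_eq_mul]
      linarith
  have houter := intervalIntegral.norm_integral_le_of_norm_le Real.pi_pos.le
    (Filter.Eventually.of_forall hinner)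
    (((continuous_lorentzian (rb / d)).const_mul _).intervalIntegrable _ _) (μ := volume)
  rw [intervalIntegral.integral_const_mul, Real.norm_eq_abs] at houter
  have hc : 2 / π ^ 2 ≤ 1 := by
    rw [div_le_one (by positivity)]
    nlinarith [Real.pi_gt_three]
  rw [Fr, abs_mul, abs_of_pos (show 0 < 2 / π ^ 2 by positivity)]
  have h1 := integral_lorentzian_le (rb / d) π
  have h3 : 0 ≤ 5100 * d⁻¹ := by positivity
  calc _ ≤ 1 * (5100 * d⁻¹ * 2) :=
        mul_le_mul hc (houter.trans (mul_le_mul_of_nonneg_left h1 h3)) (abs_nonneg _) zero_le_one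
    _ = _ := by ring

/-- There is an absolute constant `C > 0` such that for every `(r,s) ∈ Π`
with `r² + s² = 1` and every `(r̄,s̄) ∈ Π` with `0 < D ≤ 1/64`, where
`D = (r−r̄)² + (s−s̄)²`, one has `|F^r(r,s,r̄,s̄)| ≤ C · D^{−1/2}`. -/
theorem stmt_3 :
    ∃ C : ℝ, 0 < C ∧ ∀ r s rb sb : ℝ, 0 ≤ r → 0 ≤ s → r ^ 2 + s ^ 2 = 1 →
      0 ≤ rb → 0 ≤ sb →
      0 < (r - rb) ^ 2 + (s - sb) ^ 2 → (r - rb) ^ 2 + (s - sb) ^ 2 ≤ 1 / 64 →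
      |Fr r s rb sb| ≤ C * ((r - rb) ^ 2 + (s - sb) ^ 2) ^ (-(1:ℝ)/2) := by
  refine ⟨10200, by norm_num, fun r s rb sb hr hs _ hrb hsb hD _ => ?_⟩
  rw [neg_div, Real.rpow_neg hD.le, ← Real.sqrt_eq_rpow]
  exact abs_Fr_le hr hs hrb hsb (Real.sqrt_pos.mpr hD) (Real.sq_sqrt hD.le)
end

section
/- There exists an absolute constant C > 0 with the following property. Let w : Π → ℝ be measurable, N ≥ 0, I ≥ 0, and suppose |w(r̄, s̄)| ≤ N r̄ s̄ for almost every (r̄, s̄) ∈ Π and ∫∫_Π (r̄² + s̄²) |w(r̄, s̄)| dr̄ ds̄ = I < ∞. Then for every (r, s) ∈ Π with r² + s² = 1, the integrals defining u^r[w](r, s) and u^s[w](r, s) converge absolutely and |u^r[w](r, s)| ≤ C I^{1/2} N^{1/2} and |u^s[w](r, s)| ≤ C I^{1/2} N^{1/2}. -/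
open MeasureTheory Real

/-- `F^s(r,s,r̄,s̄) = F^r(s,r,s̄,r̄)`. -/
noncomputable def Fs (r s rb sb : ℝ) : ℝ := Fr s r sb rb

/-- The quadrant `Π = {(r,s) : r ≥ 0, s ≥ 0}`. -/
def quadrant : Set (ℝ × ℝ) := Set.Ici (0:ℝ) ×ˢ Set.Ici (0:ℝ)

/-- `u^r[w](r,s) = −∫∫_Π F^r(r,s,r̄,s̄) w(r̄,s̄) ds̄ dr̄`. -/
noncomputable def uR (w : ℝ × ℝ → ℝ) (r s : ℝ) : ℝ :=
  -∫ p in quadrant, Fr r s p.1 p.2 * w p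

/-- `u^s[w](r,s) = ∫∫_Π F^s(r,s,r̄,s̄) w(r̄,s̄) ds̄ dr̄`. -/
noncomputable def uS (w : ℝ × ℝ → ℝ) (r s : ℝ) : ℝ :=
  ∫ p in quadrant, Fs r s p.1 p.2 * w p

/-- The half-angle terms of `Xmm` dominate an affine function of the angle. -/
lemma sq_affine_le_of_dist_le {r a d θ : ℝ} (hr : 0 ≤ r) (ha : 0 ≤ a) (hd : 0 ≤ d)
    (hra : |r - a| ≤ d) (hθ : 0 ≤ θ) (hθ' : θ ≤ π) :
    ((d + a * θ) / 8) ^ 2 ≤ d ^ 2 + 2 * r * a * (1 - cos θ) := by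
  have hcos : 0 ≤ 1 - cos θ := by linarith [cos_le_one θ]
  have hra' := abs_le.1 hra
  rcases le_or_gt a (2 * r) with h | h
  · have h1 : 2 / π ^ 2 * θ ^ 2 ≤ 1 - cos θ := by
      linarith [cos_le_one_sub_mul_cos_sq (x := θ) (by rwa [abs_of_nonneg hθ])]
    have hpi : 1 / 8 ≤ 2 / π ^ 2 := by
      rw [div_le_div_iff₀ (by norm_num) (by positivity)]
      nlinarith [pi_lt_d2, pi_pos]
    have h2 : 1 / 8 * θ ^ 2 ≤ 1 - cos θ := by
      nlinarith [mul_le_mul_of_nonneg_right hpi (sq_nonneg θ)]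
    have h3 : a ^ 2 * (1 / 8 * θ ^ 2) ≤ 2 * r * a * (1 - cos θ) := by
      apply mul_le_mul _ h2 (by positivity) (by positivity)
      nlinarith
    nlinarith [sq_nonneg (d - a * θ), sq_nonneg (a * θ), sq_nonneg d]
  · have h1 : a ≤ 2 * d := by linarith
    have h2 : a * θ ≤ 2 * d * 3.15 :=
      mul_le_mul h1 (by linarith [pi_lt_d2]) hθ (by positivity)
    have h3 : 0 ≤ 2 * r * a * (1 - cos θ) := by positivity
    have h4 : (d + a * θ) / 8 ≤ d := by linarith
    nlinarith [pow_le_pow_left₀ (by positivity) h4 2]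

lemma intervalIntegrable_affine_rpow {e b : ℝ} (he : 0 < e) (hb : 0 ≤ b) :
    IntervalIntegrable (fun t : ℝ => (e + b * t) ^ (-(3 / 2) : ℝ)) volume 0 π := by
  apply ContinuousOn.intervalIntegrable
  rw [Set.uIcc_of_le pi_pos.le]
  refine ContinuousOn.rpow_const (by fun_prop) fun t ht => Or.inl ?_
  have := mul_nonneg hb ht.1
  positivity

lemma mul_integral_affine_rpow_le {e b : ℝ} (he : 0 < e) (hb : 0 ≤ b) :
    b * ∫ t in (0:ℝ)..π, (e + b * t) ^ (-(3 / 2) : ℝ) ≤ 2 * e ^ (-(1 / 2) : ℝ) := by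
  have hpos : ∀ t ∈ Set.uIcc (0:ℝ) π, 0 < e + b * t := by
    intro t ht
    rw [Set.uIcc_of_le pi_pos.le] at ht
    have := mul_nonneg hb ht.1
    positivity
  rw [← intervalIntegral.integral_const_mul,
    intervalIntegral.integral_eq_sub_of_hasDerivAt
      (f := fun t => -2 * (e + b * t) ^ (-(1 / 2) : ℝ)) _
      ((intervalIntegrable_affine_rpow he hb).const_mul b)]
  · have : 0 ≤ (e + b * π) ^ (-(1 / 2) : ℝ) := rpow_nonneg (hpos π (by simp)).le _
    simp only [mul_zero, add_zero]
    linarith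
  · intro t ht
    have h := ((((hasDerivAt_id t).const_mul b).const_add e).rpow_const (p := -(1 / 2))
      (Or.inl (hpos t ht).ne')).const_mul (-2)
    refine h.congr_deriv ?_
    norm_num
    ring

/-- The kernel `F^r` is bounded by a multiple of the inverse distance in the quadrant. -/
lemma abs_Fr_le_s7 {r s a b : ℝ} (hr : 0 ≤ r) (hs : 0 ≤ s) (ha : 0 ≤ a) (hb : 0 ≤ b)
    (hd : 0 < √((a - r) ^ 2 + (b - s) ^ 2)) :
    |Fr r s a b| ≤ 2048 / √((a - r) ^ 2 + (b - s) ^ 2) := by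
  set d := √((a - r) ^ 2 + (b - s) ^ 2) with hd_def
  have hd2 : d ^ 2 = (r - a) ^ 2 + (s - b) ^ 2 := by
    rw [hd_def, sq_sqrt (by positivity)]; ring
  have hra : |r - a| ≤ d := abs_le_of_sq_le_sq (by nlinarith [sq_nonneg (s - b)]) hd.le
  have hsb : |s - b| ≤ d := abs_le_of_sq_le_sq (by nlinarith [sq_nonneg (r - a)]) hd.le
  have key : ∀ θ ∈ Set.Ioc 0 π, ∀ φ ∈ Set.Ioc 0 π,
      ‖a * b * cos θ * (b - s * cos φ) / (Xmm r s a b θ φ) ^ 2‖ ≤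
        a * b * (d / 8 + a / 8 * θ) ^ (-(3 / 2) : ℝ) * (d / 8 + b / 8 * φ) ^ (-(3 / 2) : ℝ) := by
    intro θ hθ φ hφ
    have h1 := sq_affine_le_of_dist_le hr ha hd.le hra hθ.1.le hθ.2
    have h2 := sq_affine_le_of_dist_le hs hb hd.le hsb hφ.1.le hφ.2
    have hcθ : 0 ≤ 2 * r * a * (1 - cos θ) :=
      mul_nonneg (by positivity) (by linarith [cos_le_one θ])
    have hcφ : 0 ≤ 2 * s * b * (1 - cos φ) :=
      mul_nonneg (by positivity) (by linarith [cos_le_one φ])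
    set X := Xmm r s a b θ φ with hX
    have hXeq : X = d ^ 2 + 2 * r * a * (1 - cos θ) + 2 * s * b * (1 - cos φ) := by
      rw [hX, Xmm, hd2]
    have hXpos : 0 < X := by rw [hXeq]; positivity
    have hu : 0 < d / 8 + a / 8 * θ := by have := hθ.1; positivity
    have hv : 0 < d / 8 + b / 8 * φ := by have := hφ.1; positivity
    have hul : d / 8 + a / 8 * θ ≤ √X := by
      apply le_sqrt_of_sq_le
      rw [hXeq]
      calc _ = ((d + a * θ) / 8) ^ 2 := by ring
        _ ≤ _ := by linarith
    have hvl : d / 8 + b / 8 * φ ≤ √X := by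
      apply le_sqrt_of_sq_le
      rw [hXeq]
      calc _ = ((d + b * φ) / 8) ^ 2 := by ring
        _ ≤ _ := by linarith
    have hs0 : 0 < √X := sqrt_pos.2 hXpos
    have hnum : |b - s * cos φ| ≤ √X := by
      apply abs_le_sqrt
      rw [hXeq, hd2]
      nlinarith [sq_nonneg (r - a), cos_sq_add_sin_sq φ, mul_nonneg (sq_nonneg s) (sq_nonneg (sin φ))]
    have hsplit : √X / X ^ 2 = √X ^ (-(3 / 2) : ℝ) * √X ^ (-(3 / 2) : ℝ) := by
      rw [← rpow_add hs0, show (-(3 / 2) + -(3 / 2) : ℝ) = -((3 : ℕ) : ℝ) by norm_num,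
        rpow_neg hs0.le, rpow_natCast]
      nth_rewrite 2 [← sq_sqrt hXpos.le]
      field_simp
    rw [norm_div, norm_mul, norm_mul, Real.norm_of_nonneg (mul_nonneg ha hb),
      Real.norm_of_nonneg (sq_nonneg X), Real.norm_eq_abs, Real.norm_eq_abs]
    calc a * b * |cos θ| * |b - s * cos φ| / X ^ 2
        ≤ a * b * 1 * √X / X ^ 2 := by
          gcongr
          exact abs_cos_le_one θ
      _ = a * b * (√X ^ (-(3 / 2) : ℝ) * √X ^ (-(3 / 2) : ℝ)) := by rw [← hsplit]; ring
      _ ≤ a * b * ((d / 8 + a / 8 * θ) ^ (-(3 / 2) : ℝ) *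
            (d / 8 + b / 8 * φ) ^ (-(3 / 2) : ℝ)) := by
          gcongr a * b * (?_ * ?_)
          · exact rpow_le_rpow_of_nonpos hu hul (by norm_num)
          · exact rpow_le_rpow_of_nonpos hv hvl (by norm_num)
      _ = _ := by ring
  have hd8 : 0 < d / 8 := by positivity
  have ha8 : 0 ≤ a / 8 := by positivity
  have hb8 : 0 ≤ b / 8 := by positivity
  have hint := intervalIntegral.norm_integral_le_of_norm_le (μ := volume)
    (f := fun θ => ∫ φ in (0:ℝ)..π, a * b * cos θ * (b - s * cos φ) / (Xmm r s a b θ φ) ^ 2)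
    pi_pos.le
    (Filter.Eventually.of_forall fun θ hθ =>
      intervalIntegral.norm_integral_le_of_norm_le pi_pos.le
        (Filter.Eventually.of_forall (key θ hθ))
        ((intervalIntegrable_affine_rpow hd8 hb8).const_mul _))
    (by
      simp_rw [intervalIntegral.integral_const_mul]
      exact ((intervalIntegrable_affine_rpow hd8 ha8).const_mul _).mul_const _)
  simp_rw [intervalIntegral.integral_const_mul] at hint
  rw [intervalIntegral.integral_mul_const, intervalIntegral.integral_const_mul] at hint
  have hA := mul_integral_affine_rpow_le hd8 ha8
  have hB := mul_integral_affine_rpow_le hd8 hb8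
  set A := ∫ t in (0:ℝ)..π, (d / 8 + a / 8 * t) ^ (-(3 / 2) : ℝ)
  set B := ∫ t in (0:ℝ)..π, (d / 8 + b / 8 * t) ^ (-(3 / 2) : ℝ)
  have hB0 : 0 ≤ B := intervalIntegral.integral_nonneg pi_pos.le fun t ht =>
    rpow_nonneg (add_nonneg hd8.le (mul_nonneg hb8 ht.1)) _
  have hprod := mul_le_mul hA hB (mul_nonneg hb8 hB0) (by positivity)
  have hpow : (d / 8) ^ (-(1 / 2) : ℝ) * (d / 8) ^ (-(1 / 2) : ℝ) = 8 / d := by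
    rw [← rpow_add hd8, show (-(1 / 2) + -(1 / 2) : ℝ) = -1 by norm_num, rpow_neg_one, inv_div]
  have hpi : 2 / π ^ 2 ≤ 1 := by
    rw [div_le_one (by positivity)]
    nlinarith [pi_gt_three]
  rw [Fr, abs_mul, abs_of_nonneg (by positivity)]
  calc _ ≤ 1 * (a * b * A * B) := by
        apply mul_le_mul hpi hint (norm_nonneg _) zero_le_one
    _ = 64 * (a / 8 * A * (b / 8 * B)) := by ring
    _ ≤ 64 * (4 * (8 / d)) := by rw [← hpow]; linarith
    _ = _ := by ring

lemma measurable_Fr (r s : ℝ) : Measurable fun p : ℝ × ℝ => Fr r s p.1 p.2 := by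
  unfold Fr Xmm
  simp_rw [intervalIntegral.integral_of_le pi_pos.le]
  refine Measurable.const_mul ?_ _
  refine (StronglyMeasurable.integral_prod_right ?_).measurable
  refine StronglyMeasurable.integral_prod_right (α := (ℝ × ℝ) × ℝ)
    (f := fun q φ => q.1.1 * q.1.2 * cos q.2 * (q.1.2 - s * cos φ) /
      ((r - q.1.1) ^ 2 + (s - q.1.2) ^ 2 + 2 * r * q.1.1 * (1 - cos q.2) +
        2 * s * q.1.2 * (1 - cos φ)) ^ 2) ?_
  exact Measurable.stronglyMeasurable (by unfold Function.uncurry; fun_prop)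

/-- The integral of the inverse distance to a point over a disc around it. -/
lemma lintegral_inv_dist_le (x : ℝ × ℝ) {R : ℝ} (hR : 0 ≤ R) :
    ∫⁻ p : ℝ × ℝ, ENNReal.ofReal (if √((p.1 - x.1) ^ 2 + (p.2 - x.2) ^ 2) < R then
      1 / √((p.1 - x.1) ^ 2 + (p.2 - x.2) ^ 2) else 0) ≤ ENNReal.ofReal (2 * π * R) := by
  let f : ℝ × ℝ → ENNReal := fun p =>
    ENNReal.ofReal (if √(p.1 ^ 2 + p.2 ^ 2) < R then 1 / √(p.1 ^ 2 + p.2 ^ 2) else 0)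
  have htrans := lintegral_sub_right_eq_self (μ := (volume : Measure (ℝ × ℝ))) f x
  simp only [f, Prod.fst_sub, Prod.snd_sub] at htrans
  rw [htrans]
  change ∫⁻ p, f p ≤ _
  rw [← lintegral_comp_polarCoord_symm f]
  have hpt : ∀ q ∈ polarCoord.target, ENNReal.ofReal q.1 • f (polarCoord.symm q) ≤
      (Set.Ioo 0 R ×ˢ Set.Ioo (-π) π).indicator 1 q := by
    rintro ⟨ρ, α⟩ hq
    simp only [polarCoord_target, Set.mem_prod, Set.mem_Ioi] at hq
    have hsqrt : √((ρ * cos α) ^ 2 + (ρ * sin α) ^ 2) = ρ := by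
      rw [← sqrt_sq hq.1.le]
      congr 1
      rw [sqrt_sq hq.1.le]
      linear_combination ρ ^ 2 * cos_sq_add_sin_sq α
    simp only [f, polarCoord_symm_apply, hsqrt, smul_eq_mul]
    by_cases h : ρ < R
    · rw [if_pos h, ← ENNReal.ofReal_mul hq.1.le, mul_one_div_cancel hq.1.ne',
        Set.indicator_of_mem (Set.mk_mem_prod (Set.mem_Ioo.2 ⟨hq.1, h⟩) hq.2)]
      simp
    · simp [if_neg h]
  calc _ ≤ ∫⁻ q in polarCoord.target, (Set.Ioo 0 R ×ˢ Set.Ioo (-π) π).indicator 1 q :=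
        setLIntegral_mono' polarCoord.open_target.measurableSet hpt
    _ ≤ ∫⁻ q, (Set.Ioo 0 R ×ˢ Set.Ioo (-π) π).indicator 1 q := setLIntegral_le_lintegral _ _
    _ = volume (Set.Ioo 0 R ×ˢ Set.Ioo (-π) π) :=
        lintegral_indicator_one (measurableSet_Ioo.prod measurableSet_Ioo)
    _ = _ := by
        rw [Measure.volume_eq_prod, Measure.prod_prod, Real.volume_Ioo, Real.volume_Ioo,
          ← ENNReal.ofReal_mul (by linarith)]
        congr 1
        ring

/-- Pointwise splitting of `v / dist` at the threshold `dist * |(a, b)| ^ 2 = l`. -/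
lemma div_dist_le_add {r s a b v N l : ℝ} (hrs : r ^ 2 + s ^ 2 = 1) (hl : 0 < l) (hN : 0 ≤ N)
    (hv : 0 ≤ v) (hvN : v ≤ N * (a * b)) :
    v / √((a - r) ^ 2 + (b - s) ^ 2) ≤ (a ^ 2 + b ^ 2) * v / l +
      N * (3 / 2 * (3 * l) ^ (1 / 3 : ℝ) *
        (Set.Icc (-(3 * l) ^ (1 / 3 : ℝ)) ((3 * l) ^ (1 / 3 : ℝ)) ×ˢ
          Set.Icc (-(3 * l) ^ (1 / 3 : ℝ)) ((3 * l) ^ (1 / 3 : ℝ))).indicator 1 (a, b) +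
      9 / 8 * if √((a - r) ^ 2 + (b - s) ^ 2) < 4 * l then
        1 / √((a - r) ^ 2 + (b - s) ^ 2) else 0) := by
  set d := √((a - r) ^ 2 + (b - s) ^ 2) with hd
  set ρ := (3 * l) ^ (1 / 3 : ℝ) with hρ
  set q := √(a ^ 2 + b ^ 2) with hq
  have hρ0 : 0 ≤ ρ := by positivity
  have hρ3 : ρ ^ 3 = 3 * l := by
    rw [hρ, ← rpow_natCast, ← rpow_mul (by positivity)]
    norm_num
  have hd0 : 0 ≤ d := sqrt_nonneg _
  have hq0 : 0 ≤ q := sqrt_nonneg _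
  have hd2 : d ^ 2 = (a - r) ^ 2 + (b - s) ^ 2 := sq_sqrt (by positivity)
  have hq2 : q ^ 2 = a ^ 2 + b ^ 2 := sq_sqrt (by positivity)
  have hcs : |a * r + b * s| ≤ q := by
    apply abs_le_of_sq_le_sq _ hq0
    nlinarith [sq_nonneg (a * s - b * r), mul_comm (a ^ 2 + b ^ 2) (r ^ 2 + s ^ 2)]
  have hdq : |q - 1| ≤ d := by
    apply abs_le_of_sq_le_sq _ hd0
    nlinarith [(abs_le.1 hcs).2]
  have hdq1 := abs_le.1 hdq
  have hI1 : 0 ≤ (Set.Icc (-ρ) ρ ×ˢ Set.Icc (-ρ) ρ).indicator (1 : ℝ × ℝ → ℝ) (a, b) :=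
    Set.indicator_nonneg (fun _ _ => zero_le_one) _
  have hI2 : 0 ≤ if d < 4 * l then 1 / d else 0 := by split_ifs <;> positivity
  have hT1 : 0 ≤ (a ^ 2 + b ^ 2) * v / l := by positivity
  have hvq : v ≤ N * (q ^ 2 / 2) := by
    refine hvN.trans (mul_le_mul_of_nonneg_left ?_ hN)
    nlinarith [sq_nonneg (a - b)]
  rcases hd0.eq_or_lt with h0 | h0
  · rw [← h0, div_zero]
    rw [← h0] at hI2
    positivity
  rcases le_or_gt l (q ^ 2 * d) with h | h
  · have : v / d ≤ (a ^ 2 + b ^ 2) * v / l := by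
      rw [div_le_div_iff₀ h0 hl, ← hq2]
      nlinarith
    have : 0 ≤ N * (3 / 2 * ρ * (Set.Icc (-ρ) ρ ×ˢ Set.Icc (-ρ) ρ).indicator 1 (a, b) +
        9 / 8 * if d < 4 * l then 1 / d else 0) := by positivity
    linarith
  refine le_add_of_nonneg_of_le hT1 ?_
  rcases le_or_gt (1 / 2) d with h2 | h2
  · have hq3 : q ≤ 3 * d := by linarith
    have hqρ : q ≤ ρ := by
      apply le_of_pow_le_pow_left₀ (n := 3) (by norm_num) hρ0
      rw [hρ3]
      nlinarith [mul_le_mul_of_nonneg_left hq3 (sq_nonneg q)]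
    have haq : |a| ≤ ρ := (abs_le_sqrt (by nlinarith [sq_nonneg b])).trans hqρ
    have hbq : |b| ≤ ρ := (abs_le_sqrt (by nlinarith [sq_nonneg a])).trans hqρ
    rw [Set.indicator_of_mem
      (Set.mk_mem_prod (Set.mem_Icc.2 (abs_le.1 haq)) (Set.mem_Icc.2 (abs_le.1 hbq))), Pi.one_apply, mul_one]
    calc v / d ≤ N * (3 / 2 * ρ) := by
          rw [div_le_iff₀ h0, mul_assoc]
          refine hvq.trans (mul_le_mul_of_nonneg_left ?_ hN)
          nlinarith [mul_le_mul hqρ hq3 hq0 hρ0]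
      _ ≤ _ := by gcongr; linarith
  · have hq1 : 1 / 2 ≤ q := by linarith
    have hq4 : q ^ 2 ≤ 9 / 4 := by
      have := pow_le_pow_left₀ hq0 (by linarith : q ≤ 3 / 2) 2
      linarith
    have hq5 : 1 / 4 ≤ q ^ 2 := by
      have := pow_le_pow_left₀ (by norm_num) hq1 2
      linarith
    have hdl : d < 4 * l := by linarith [mul_le_mul_of_nonneg_right hq5 hd0]
    rw [if_pos hdl]
    calc v / d ≤ N * (9 / 8 * (1 / d)) := by
          rw [div_le_iff₀ h0]
          calc v ≤ N * (9 / 8) := hvq.trans (mul_le_mul_of_nonneg_left (by linarith) hN)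
            _ = _ := by field_simp
      _ ≤ _ := by gcongr; linarith [mul_nonneg (mul_nonneg (by norm_num : (0:ℝ) ≤ 3 / 2) hρ0) hI1]

/-- An interpolation bound for the convolution with the inverse distance. -/
lemma setLIntegral_div_dist_le {w : ℝ × ℝ → ℝ} {N I r s l : ℝ} (hw : Measurable w)
    (hN : 0 ≤ N) (hI : 0 ≤ I)
    (hwN : ∀ᵐ p ∂(volume.restrict quadrant), |w p| ≤ N * (p.1 * p.2))
    (hwI : (∫⁻ p in quadrant, ENNReal.ofReal ((p.1 ^ 2 + p.2 ^ 2) * |w p|)) = ENNReal.ofReal I)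
    (hrs : r ^ 2 + s ^ 2 = 1) (hl : 0 < l) :
    ∫⁻ p in quadrant, ENNReal.ofReal (|w p| / √((p.1 - r) ^ 2 + (p.2 - s) ^ 2)) ≤
      ENNReal.ofReal (I / l + N * (18 * l + 9 * π * l)) := by
  set ρ := (3 * l) ^ (1 / 3 : ℝ) with hρ
  have hρ0 : 0 ≤ ρ := by positivity
  have hρ3 : ρ ^ 3 = 3 * l := by
    rw [hρ, ← rpow_natCast, ← rpow_mul (by positivity)]
    norm_num
  set S := Set.Icc (-ρ) ρ ×ˢ Set.Icc (-ρ) ρ with hS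
  have hSm : MeasurableSet S := measurableSet_Icc.prod measurableSet_Icc
  let g : ℝ × ℝ → ℝ := fun p => if √((p.1 - r) ^ 2 + (p.2 - s) ^ 2) < 4 * l then
        1 / √((p.1 - r) ^ 2 + (p.2 - s) ^ 2) else 0
  have hg0 : ∀ p, 0 ≤ g p := fun p => by simp only [g]; split_ifs <;> positivity
  have hgm : Measurable g :=
    Measurable.ite (measurableSet_lt (by fun_prop) measurable_const) (by fun_prop) measurable_const
  calc _ ≤ ∫⁻ p in quadrant,
        (ENNReal.ofReal (1 / l) * ENNReal.ofReal ((p.1 ^ 2 + p.2 ^ 2) * |w p|) +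
          ENNReal.ofReal N * (ENNReal.ofReal (3 / 2 * ρ) * S.indicator 1 p +
            ENNReal.ofReal (9 / 8) * ENNReal.ofReal (g p))) := by
        refine lintegral_mono_ae (hwN.mono fun p hp => ?_)
        have h := div_dist_le_add hrs hl hN (abs_nonneg (w p)) hp
        refine (ENNReal.ofReal_le_ofReal h).trans (le_of_eq ?_)
        have h1 : ENNReal.ofReal (S.indicator (1 : ℝ × ℝ → ℝ) p) = S.indicator 1 p := by
          by_cases hpS : p ∈ S <;> simp [hpS]
        have hI1 : 0 ≤ S.indicator (1 : ℝ × ℝ → ℝ) p :=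
          Set.indicator_nonneg (fun _ _ => zero_le_one) _
        have := hg0 p
        rw [← h1, ← ENNReal.ofReal_mul (by positivity), ← ENNReal.ofReal_mul (by positivity),
          ← ENNReal.ofReal_mul (by positivity), ← ENNReal.ofReal_add (by positivity)
          (by positivity), ← ENNReal.ofReal_mul hN, ← ENNReal.ofReal_add (by positivity)
          (by positivity)]
        congr 2
        ring
    _ = ENNReal.ofReal (1 / l) * ENNReal.ofReal I +
          ENNReal.ofReal N * (ENNReal.ofReal (3 / 2 * ρ) * (∫⁻ p in quadrant, S.indicator 1 p) +
            ENNReal.ofReal (9 / 8) * ∫⁻ p in quadrant, ENNReal.ofReal (g p)) := by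
        have hi : Measurable (S.indicator (1 : ℝ × ℝ → ENNReal)) := measurable_one.indicator hSm
        rw [lintegral_add_left (by fun_prop), lintegral_const_mul _ (by fun_prop), hwI,
          lintegral_const_mul _ (by fun_prop), lintegral_add_left (by fun_prop),
          lintegral_const_mul _ hi, lintegral_const_mul _ (by fun_prop)]
    _ ≤ ENNReal.ofReal (1 / l) * ENNReal.ofReal I +
          ENNReal.ofReal N * (ENNReal.ofReal (3 / 2 * ρ) * ENNReal.ofReal (4 * ρ ^ 2) +
            ENNReal.ofReal (9 / 8) * ENNReal.ofReal (2 * π * (4 * l))) := by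
        gcongr
        · refine (setLIntegral_le_lintegral _ _).trans ?_
          rw [lintegral_indicator_one hSm, hS, Measure.volume_eq_prod, Measure.prod_prod,
            Real.volume_Icc, ← ENNReal.ofReal_mul (by linarith)]
          apply ENNReal.ofReal_le_ofReal
          linarith
        · exact (setLIntegral_le_lintegral _ _).trans
            (lintegral_inv_dist_le (r, s) (by positivity))
    _ = _ := by
        rw [← ENNReal.ofReal_mul (by positivity), ← ENNReal.ofReal_mul (by positivity),
          ← ENNReal.ofReal_mul (by positivity), ← ENNReal.ofReal_add (by positivity)
          (by positivity), ← ENNReal.ofReal_mul hN, ← ENNReal.ofReal_add (by positivity)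
          (by positivity)]
        congr 1
        linear_combination 6 * N * hρ3

lemma le_mul_sqrt_mul_sqrt {x I N c : ℝ} (hI : 0 ≤ I) (hN : 0 ≤ N)
    (h : ∀ l : ℝ, 0 < l → x ≤ I / l + N * (c * l)) (hc : 0 ≤ c) :
    x ≤ (1 + c) * √I * √N := by
  have hlim : Filter.Tendsto (fun ε : ℝ => (1 + c) * √(I + ε) * √(N + ε)) (nhdsWithin 0 (Set.Ioi 0))
      (nhds ((1 + c) * √I * √N)) := by
    have : Continuous fun ε : ℝ => (1 + c) * √(I + ε) * √(N + ε) := by fun_prop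
    simpa using (this.tendsto 0).mono_left nhdsWithin_le_nhds
  refine ge_of_tendsto hlim (eventually_nhdsWithin_of_forall fun ε hε => ?_)
  have hε : 0 < ε := hε
  have hi : 0 < √(I + ε) := sqrt_pos.2 (by linarith)
  have hn : 0 < √(N + ε) := sqrt_pos.2 (by linarith)
  calc x ≤ I / (√(I + ε) / √(N + ε)) + N * (c * (√(I + ε) / √(N + ε))) := h _ (by positivity)
    _ ≤ (I + ε) / (√(I + ε) / √(N + ε)) + (N + ε) * (c * (√(I + ε) / √(N + ε))) := by
        gcongr <;> linarith
    _ = √(I + ε) ^ 2 / (√(I + ε) / √(N + ε)) + √(N + ε) ^ 2 * (c * (√(I + ε) / √(N + ε))) := by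
        rw [sq_sqrt (by linarith), sq_sqrt (by linarith)]
    _ = _ := by field_simp

/-- Kernels dominated by the inverse distance are integrable against `w`, with the
interpolation bound. -/
lemma integrableOn_and_abs_integral_le {K w : ℝ × ℝ → ℝ} {N I r s c : ℝ} (hK : Measurable K)
    (hc : 0 ≤ c) (hKc : ∀ p ∈ quadrant, 0 < √((p.1 - r) ^ 2 + (p.2 - s) ^ 2) →
      |K p| ≤ c / √((p.1 - r) ^ 2 + (p.2 - s) ^ 2))
    (hw : Measurable w) (hN : 0 ≤ N) (hI : 0 ≤ I)
    (hwN : ∀ᵐ p ∂(volume.restrict quadrant), |w p| ≤ N * (p.1 * p.2))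
    (hwI : (∫⁻ p in quadrant, ENNReal.ofReal ((p.1 ^ 2 + p.2 ^ 2) * |w p|)) = ENNReal.ofReal I)
    (hrs : r ^ 2 + s ^ 2 = 1) :
    IntegrableOn (fun p => K p * w p) quadrant ∧
      |∫ p in quadrant, K p * w p| ≤ c * (1 + (18 + 9 * π)) * √I * √N := by
  have hQ : MeasurableSet quadrant := measurableSet_Ici.prod measurableSet_Ici
  have hdom : ∫⁻ p in quadrant, ‖K p * w p‖ₑ ≤ ENNReal.ofReal c *
      ∫⁻ p in quadrant, ENNReal.ofReal (|w p| / √((p.1 - r) ^ 2 + (p.2 - s) ^ 2)) := by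
    rw [← lintegral_const_mul _ (by fun_prop)]
    apply lintegral_mono_ae
    have hne : ∀ᵐ p ∂(volume.restrict quadrant), p ≠ (r, s) :=
      ae_restrict_of_ae (Measure.ae_ne volume (r, s))
    filter_upwards [hne, ae_restrict_mem hQ] with p hp hpQ
    have hd : 0 < √((p.1 - r) ^ 2 + (p.2 - s) ^ 2) := by
      refine sqrt_pos.2 (lt_of_le_of_ne (by positivity) fun h0 => hp ?_)
      have h1 : p.1 - r = 0 := by nlinarith [sq_nonneg (p.1 - r), sq_nonneg (p.2 - s)]
      have h2 : p.2 - s = 0 := by nlinarith [sq_nonneg (p.1 - r), sq_nonneg (p.2 - s)]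
      exact Prod.ext (by linarith) (by linarith)
    rw [← ENNReal.ofReal_mul hc, ← ofReal_norm, norm_mul, Real.norm_eq_abs,
      Real.norm_eq_abs]
    apply ENNReal.ofReal_le_ofReal
    calc _ ≤ c / √((p.1 - r) ^ 2 + (p.2 - s) ^ 2) * |w p| := by
          gcongr
          exact hKc p hpQ hd
      _ = _ := by ring
  have hbound : ∀ l : ℝ, 0 < l → ∫⁻ p in quadrant, ‖K p * w p‖ₑ ≤
      ENNReal.ofReal (c * (I / l + N * ((18 + 9 * π) * l))) := fun l hl => by
    rw [ENNReal.ofReal_mul hc, add_mul]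
    exact hdom.trans (by gcongr; exact setLIntegral_div_dist_le hw hN hI hwN hwI hrs hl)
  have hint : IntegrableOn (fun p => K p * w p) quadrant :=
    ⟨(hK.mul hw).aestronglyMeasurable, (hbound 1 one_pos).trans_lt ENNReal.ofReal_lt_top⟩
  refine ⟨hint, ?_⟩
  have hle : ∀ l : ℝ, 0 < l → |∫ p in quadrant, K p * w p| ≤
      c * I / l + c * N * ((18 + 9 * π) * l) := fun l hl => by
    have h1 : ‖∫ p in quadrant, K p * w p‖ₑ ≤ _ :=
      (enorm_integral_le_lintegral_enorm _).trans (hbound l hl)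
    rw [← ofReal_norm, ENNReal.ofReal_le_ofReal_iff (by positivity)] at h1
    rw [← Real.norm_eq_abs]
    exact h1.trans_eq (by ring)
  have := le_mul_sqrt_mul_sqrt (mul_nonneg hc hI) (mul_nonneg hc hN) hle (by positivity)
  refine this.trans_eq ?_
  rw [sqrt_mul hc, sqrt_mul hc]
  linear_combination (1 + (18 + 9 * π)) * √I * √N * mul_self_sqrt hc

/-- There is an absolute constant `C > 0` such that: if `w` is measurable,
`|w(r̄,s̄)| ≤ N r̄ s̄` a.e. on `Π`, and `∫∫_Π (r̄² + s̄²)|w| = I < ∞`, then for every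
`(r,s) ∈ Π` with `r² + s² = 1` the integrals defining `u^r[w](r,s)` and `u^s[w](r,s)`
converge absolutely, and `|u^r[w](r,s)| ≤ C I^{1/2} N^{1/2}`,
`|u^s[w](r,s)| ≤ C I^{1/2} N^{1/2}`. -/
theorem stmt_7 :
    ∃ C : ℝ, 0 < C ∧
      ∀ (w : ℝ × ℝ → ℝ) (N I : ℝ), Measurable w → 0 ≤ N → 0 ≤ I →
        (∀ᵐ p ∂(volume.restrict quadrant), |w p| ≤ N * (p.1 * p.2)) →
        (∫⁻ p in quadrant, ENNReal.ofReal ((p.1 ^ 2 + p.2 ^ 2) * |w p|))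
          = ENNReal.ofReal I →
        ∀ r s : ℝ, 0 ≤ r → 0 ≤ s → r ^ 2 + s ^ 2 = 1 →
          IntegrableOn (fun p : ℝ × ℝ => Fr r s p.1 p.2 * w p) quadrant ∧
          IntegrableOn (fun p : ℝ × ℝ => Fs r s p.1 p.2 * w p) quadrant ∧
          |uR w r s| ≤ C * Real.sqrt I * Real.sqrt N ∧
          |uS w r s| ≤ C * Real.sqrt I * Real.sqrt N := by
  refine ⟨2048 * (1 + (18 + 9 * π)), by positivity, ?_⟩
  intro w N I hw hN hI hwN hwI r s hr hs hrs
  have hR := integrableOn_and_abs_integral_le (measurable_Fr r s) (by norm_num : (0:ℝ) ≤ 2048)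
    (fun p hp hd => abs_Fr_le_s7 hr hs hp.1 hp.2 hd) hw hN hI hwN hwI hrs
  have hS := integrableOn_and_abs_integral_le (K := fun p => Fs r s p.1 p.2)
    ((measurable_Fr s r).comp measurable_swap) (by norm_num : (0:ℝ) ≤ 2048)
    (fun p hp hd => by
      rw [add_comm] at hd ⊢
      exact abs_Fr_le_s7 hs hr hp.2 hp.1 hd) hw hN hI hwN hwI hrs
  refine ⟨hR.1, hS.1, ?_, hS.2⟩
  rw [uR, abs_neg]
  exact hR.2
end

section
/- There exists an absolute constant C > 0 such that for every measurable w : Π → ℝ and every (r, s) ∈ Π, one has ∫∫_Π |F^r(r, s, r̄, s̄)| |w(r̄, s̄)| ds̄ dr̄ ≤ C Λ(W) and ∫∫_Π |F^s(r, s, r̄, s̄)| |w(r̄, s̄)| ds̄ dr̄ ≤ C Λ(W); in particular, if Λ(W) < ∞ then |u^r[w](r, s)| ≤ C Λ(W) and |u^s[w](r, s)| ≤ C Λ(W) for all (r, s) ∈ Π. -/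
open MeasureTheory Real ENNReal

/-- `r_x = √(x₁² + x₂²)` for `x ∈ ℝ⁴`. -/
noncomputable def rx (x : Fin 4 → ℝ) : ℝ := Real.sqrt ((x 0) ^ 2 + (x 1) ^ 2)

/-- `s_x = √(x₃² + x₄²)` for `x ∈ ℝ⁴`. -/
noncomputable def sx (x : Fin 4 → ℝ) : ℝ := Real.sqrt ((x 2) ^ 2 + (x 3) ^ 2)

/-- `Λ(f) = ∫₀^∞ (vol{x ∈ ℝ⁴ : |f(x)| > λ})^{1/4} dλ`, comparable to the
Lorentz `L^{4,1}(ℝ⁴)` norm of `f`. -/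
noncomputable def Lam (f : (Fin 4 → ℝ) → ℝ) : ℝ≥0∞ :=
  ∫⁻ l in Set.Ioi (0:ℝ), (volume {x : Fin 4 → ℝ | l < |f x|}) ^ ((1:ℝ)/4)

/-- The cubic inverse power of the sup norm on `ℝ⁴` is integrable on a set `E` of finite measure,
with a bound depending only on the measure of `E`. -/
lemma setLIntegral_inv_norm_sub_pow_three_le (x : Fin 4 → ℝ) (E : Set (Fin 4 → ℝ)) :
    ∫⁻ y in E, ENNReal.ofReal ((‖y - x‖ ^ 3)⁻¹)
      ≤ ENNReal.ofReal 49 * volume E ^ ((1 : ℝ) / 4) := by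
  rcases eq_or_ne (volume E) 0 with h0 | h0
  · rw [Measure.restrict_eq_zero.2 h0]; simp
  rcases eq_or_ne (volume E) ∞ with hE | hE
  · rw [hE, ENNReal.top_rpow_of_pos (by norm_num), ENNReal.mul_top (by norm_num)]
    exact le_top
  set v : ℝ := (volume E).toReal with hv
  have hvE : volume E = ENNReal.ofReal v := (ENNReal.ofReal_toReal hE).symm
  have hv0 : 0 < v := ENNReal.toReal_pos h0 hE
  set T : ℝ := v ^ (-(3 : ℝ) / 4) with hT
  have hT0 : 0 < T := Real.rpow_pos_of_pos hv0 _
  rw [lintegral_eq_lintegral_meas_lt _ (ae_of_all _ fun y => by positivity)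
    (by fun_prop)]
  have hlevel : ∀ t : ℝ, 0 < t → (volume.restrict E) {y | t < (‖y - x‖ ^ 3)⁻¹}
      ≤ ENNReal.ofReal (16 * t ^ (-(4 : ℝ) / 3)) := by
    intro t ht
    have hr : 0 < t ^ (-(1 : ℝ) / 3) := Real.rpow_pos_of_pos ht _
    have hsub : {y | t < (‖y - x‖ ^ 3)⁻¹} ⊆ Metric.ball x (t ^ (-(1 : ℝ) / 3)) := by
      intro y hy
      rw [Set.mem_ofPred_eq] at hy
      rw [mem_ball_iff_norm]
      by_contra! hcon
      have h3 : (t ^ (-(1 : ℝ) / 3)) ^ 3 = t⁻¹ := by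
        rw [← Real.rpow_natCast, ← Real.rpow_mul ht.le, ← Real.rpow_neg_one]
        norm_num
      have h4 : t⁻¹ ≤ ‖y - x‖ ^ 3 := h3 ▸ pow_le_pow_left₀ hr.le hcon 3
      have := inv_anti₀ (inv_pos.2 ht) h4
      rw [inv_inv] at this
      linarith
    calc (volume.restrict E) {y | t < (‖y - x‖ ^ 3)⁻¹}
        ≤ volume (Metric.ball x (t ^ (-(1 : ℝ) / 3))) :=
          (Measure.restrict_apply_le _ _).trans (measure_mono hsub)
      _ = ENNReal.ofReal (16 * t ^ (-(4 : ℝ) / 3)) := by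
          rw [Real.volume_pi_ball _ hr, mul_pow, Fintype.card_fin, ← Real.rpow_natCast (t ^ _),
            ← Real.rpow_mul ht.le]
          norm_num
  have htail : ∫⁻ t in Set.Ioi T, ENNReal.ofReal (16 * t ^ (-(4 : ℝ) / 3))
      = ENNReal.ofReal (48 * v ^ ((1 : ℝ) / 4)) := by
    rw [← ofReal_integral_eq_lintegral_ofReal
      ((integrableOn_Ioi_rpow_of_lt (by norm_num) hT0).const_mul 16)
      ((ae_restrict_iff' measurableSet_Ioi).2 (ae_of_all _ fun t ht => by
        have : 0 < t := hT0.trans ht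
        positivity)), integral_const_mul, integral_Ioi_rpow_of_lt (by norm_num) hT0, hT,
      ← Real.rpow_mul hv0.le]
    congr 1
    norm_num
    ring
  have hhead : ENNReal.ofReal T * volume E = ENNReal.ofReal (v ^ ((1 : ℝ) / 4)) := by
    rw [hvE, ← ENNReal.ofReal_mul hT0.le, hT]
    nth_rewrite 2 [← Real.rpow_one v]
    rw [← Real.rpow_add hv0]
    norm_num
  calc ∫⁻ t in Set.Ioi (0 : ℝ), (volume.restrict E) {y | t < (‖y - x‖ ^ 3)⁻¹}
      = ∫⁻ t in Set.Ioc 0 T ∪ Set.Ioi T, (volume.restrict E) {y | t < (‖y - x‖ ^ 3)⁻¹} := by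
        rw [Set.Ioc_union_Ioi_eq_Ioi hT0.le]
    _ ≤ (∫⁻ t in Set.Ioc 0 T, (volume.restrict E) {y | t < (‖y - x‖ ^ 3)⁻¹})
          + ∫⁻ t in Set.Ioi T, (volume.restrict E) {y | t < (‖y - x‖ ^ 3)⁻¹} :=
        lintegral_union_le _ _ _
    _ ≤ (∫⁻ _ in Set.Ioc 0 T, volume E)
          + ∫⁻ t in Set.Ioi T, ENNReal.ofReal (16 * t ^ (-(4 : ℝ) / 3)) := by
        gcongr ?_ + ?_
        · refine lintegral_mono fun t => ?_
          exact (measure_mono (Set.subset_univ _)).trans (by simp)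
        · exact setLIntegral_mono' measurableSet_Ioi fun t ht => hlevel t (hT0.trans ht)
    _ = ENNReal.ofReal 49 * volume E ^ ((1 : ℝ) / 4) := by
        rw [htail, setLIntegral_const, Real.volume_Ioc, sub_zero, mul_comm, hhead, hvE,
          ENNReal.ofReal_rpow_of_pos hv0, ← ENNReal.ofReal_add (by positivity) (by positivity),
          ← ENNReal.ofReal_mul (by norm_num)]
        congr 1
        ring

/-- Potential estimate: the Riesz-type potential of order one of `f` is bounded by `Lam f`. -/
lemma lintegral_inv_norm_sub_pow_three_mul_le (x : Fin 4 → ℝ) {f : (Fin 4 → ℝ) → ℝ}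
    (hf : Measurable f) :
    ∫⁻ y, ENNReal.ofReal ((‖y - x‖ ^ 3)⁻¹) * ENNReal.ofReal |f y|
      ≤ ENNReal.ofReal 49 * Lam f := by
  have hG : Measurable fun y : Fin 4 → ℝ => ENNReal.ofReal ((‖y - x‖ ^ 3)⁻¹) := by fun_prop
  have hf' : Measurable fun y => |f y| := hf.abs
  calc ∫⁻ y, ENNReal.ofReal ((‖y - x‖ ^ 3)⁻¹) * ENNReal.ofReal |f y|
      = ∫⁻ y, ENNReal.ofReal |f y|
          ∂volume.withDensity fun y => ENNReal.ofReal ((‖y - x‖ ^ 3)⁻¹) :=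
        (lintegral_withDensity_eq_lintegral_mul _ hG hf'.ennreal_ofReal).symm
    _ = ∫⁻ l in Set.Ioi (0 : ℝ), ∫⁻ y in {y | l < |f y|}, ENNReal.ofReal ((‖y - x‖ ^ 3)⁻¹) := by
        rw [lintegral_eq_lintegral_meas_lt _ (ae_of_all _ fun y => abs_nonneg _) hf'.aemeasurable]
        refine lintegral_congr fun l => ?_
        rw [withDensity_apply _ (measurableSet_lt measurable_const hf')]
    _ ≤ ∫⁻ l in Set.Ioi (0 : ℝ), ENNReal.ofReal 49 * volume {y | l < |f y|} ^ ((1 : ℝ) / 4) :=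
        lintegral_mono fun l => setLIntegral_inv_norm_sub_pow_three_le x _
    _ = ENNReal.ofReal 49 * Lam f := lintegral_const_mul' _ _ ENNReal.ofReal_ne_top

/-- Polar coordinates over the upper half plane. -/
lemma lintegral_polar_half_le {h : ℝ × ℝ → ℝ≥0∞} (hh : Measurable h) :
    ∫⁻ ρ in Set.Ici (0 : ℝ), ∫⁻ θ in Set.Ioc 0 Real.pi,
        ENNReal.ofReal ρ * h (ρ * Real.cos θ, ρ * Real.sin θ) ≤ ∫⁻ a, h a := by
  rw [← lintegral_comp_polarCoord_symm, polarCoord_target, Measure.volume_eq_prod,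
    ← Measure.prod_restrict, lintegral_prod _ (by
      simp only [polarCoord_symm_apply, smul_eq_mul]; fun_prop),
    ← setLIntegral_congr (Ioi_ae_eq_Ici (μ := volume) (a := (0 : ℝ)))]
  refine lintegral_mono fun ρ => ?_
  rw [← setLIntegral_congr (Ioo_ae_eq_Ioc (μ := volume))]
  simp only [polarCoord_symm_apply, smul_eq_mul]
  exact lintegral_mono_set (Set.Ioo_subset_Ioo_left (by linarith [Real.pi_pos]))

/-- Splitting off the first coordinate of an integral over `Fin (n + 1) → ℝ`. -/
lemma lintegral_fin_succ {n : ℕ} {F : (Fin (n + 1) → ℝ) → ℝ≥0∞} (hF : Measurable F) :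
    ∫⁻ x, F x = ∫⁻ a : ℝ, ∫⁻ y : Fin n → ℝ, F (Fin.cons a y) := by
  have e := (volume_preserving_piFinSuccAbove (fun _ : Fin (n + 1) => ℝ) 0).symm
  rw [← e.lintegral_comp_emb (MeasurableEquiv.measurableEmbedding _), Measure.volume_eq_prod]
  refine (lintegral_prod _ (hF.comp (MeasurableEquiv.measurable _)).aemeasurable).trans ?_
  simp [MeasurableEquiv.piFinSuccAbove_symm_apply, Fin.insertNthEquiv]

/-- Integration over `ℝ⁴` as an iterated integral over two planes. -/
lemma lintegral_fin_four {H : (ℝ × ℝ) × (ℝ × ℝ) → ℝ≥0∞} (hH : Measurable H) :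
    ∫⁻ x : Fin 4 → ℝ, H ((x 0, x 1), (x 2, x 3)) = ∫⁻ a, ∫⁻ b, H (a, b) := by
  rw [lintegral_fin_succ (by fun_prop), Measure.volume_eq_prod,
    lintegral_prod _ (by fun_prop)]
  refine lintegral_congr fun a => ?_
  rw [lintegral_fin_succ (by fun_prop)]
  refine lintegral_congr fun b => ?_
  rw [lintegral_fin_succ (by fun_prop), lintegral_prod _ (by fun_prop)]
  refine lintegral_congr fun c => ?_
  rw [lintegral_fin_succ (by fun_prop)]
  refine lintegral_congr fun d => ?_
  change ∫⁻ _ : Fin 0 → ℝ, H ((a, b), c, d) = _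
  simp [volume_pi]

lemma Xmm_swap (r s ρ σ θ φ : ℝ) : Xmm s r σ ρ φ θ = Xmm r s ρ σ θ φ := by
  unfold Xmm; ring

/-- `Xmm` is the squared Euclidean distance of two points of `ℝ⁴`. -/
lemma Xmm_eq_sum_sq (r s ρ σ θ φ : ℝ) :
    Xmm r s ρ σ θ φ = (ρ * Real.cos θ - r) ^ 2 + (ρ * Real.sin θ) ^ 2
      + (σ * Real.cos φ - s) ^ 2 + (σ * Real.sin φ) ^ 2 := by
  unfold Xmm
  linear_combination (-ρ ^ 2) * Real.sin_sq_add_cos_sq θ - σ ^ 2 * Real.sin_sq_add_cos_sq φ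

lemma Xmm_nonneg (r s ρ σ θ φ : ℝ) : 0 ≤ Xmm r s ρ σ θ φ := by
  rw [Xmm_eq_sum_sq]; positivity

lemma abs_sub_mul_cos_le_sqrt_Xmm (r s ρ σ θ φ : ℝ) :
    |σ - s * Real.cos φ| ≤ √(Xmm r s ρ σ θ φ) := by
  refine Real.abs_le_sqrt ?_
  have h : (σ - s * Real.cos φ) ^ 2
      = (σ * Real.cos φ - s) ^ 2 + (σ * Real.sin φ) ^ 2 - (s * Real.sin φ) ^ 2 := by
    linear_combination (s ^ 2 - σ ^ 2) * Real.sin_sq_add_cos_sq φ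
  rw [Xmm_eq_sum_sq, h]
  nlinarith [sq_nonneg (s * Real.sin φ), sq_nonneg (ρ * Real.cos θ - r),
    sq_nonneg (ρ * Real.sin θ)]

lemma abs_Fr_integrand_le {ρ σ : ℝ} (hρ : 0 ≤ ρ) (hσ : 0 ≤ σ) (r s θ φ : ℝ) :
    |ρ * σ * Real.cos θ * (σ - s * Real.cos φ) / (Xmm r s ρ σ θ φ) ^ 2|
      ≤ ρ * (σ * (√(Xmm r s ρ σ θ φ) ^ 3)⁻¹) := by
  have hd := abs_sub_mul_cos_le_sqrt_Xmm r s ρ σ θ φ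
  have hX : Xmm r s ρ σ θ φ = √(Xmm r s ρ σ θ φ) ^ 2 := (Real.sq_sqrt (Xmm_nonneg ..)).symm
  set R := √(Xmm r s ρ σ θ φ) with hR
  have hR0 : 0 ≤ R := Real.sqrt_nonneg _
  rw [hX, abs_div, abs_mul, abs_mul, abs_mul, abs_of_nonneg hρ, abs_of_nonneg hσ,
    abs_of_nonneg (by positivity : (0 : ℝ) ≤ (R ^ 2) ^ 2)]
  rcases hR0.eq_or_lt with h0 | h0
  · simp [← h0]
  calc ρ * σ * |Real.cos θ| * |σ - s * Real.cos φ| / (R ^ 2) ^ 2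
      ≤ ρ * σ * 1 * R / (R ^ 2) ^ 2 := by
        gcongr
        exact Real.abs_cos_le_one θ
    _ = ρ * (σ * (R ^ 3)⁻¹) := by field_simp

/-- The angular average of the kernel `X₋₋ ^ (-3/2)`, weighted by the volume element. -/
noncomputable def angularKernel (r s ρ σ : ℝ) : ℝ≥0∞ :=
  ∫⁻ θ in Set.Ioc 0 Real.pi, ∫⁻ φ in Set.Ioc 0 Real.pi,
    ENNReal.ofReal ρ * (ENNReal.ofReal σ * ENNReal.ofReal ((√(Xmm r s ρ σ θ φ) ^ 3)⁻¹))

lemma angularKernel_swap (r s ρ σ : ℝ) : angularKernel s r σ ρ = angularKernel r s ρ σ := by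
  unfold angularKernel
  rw [lintegral_lintegral_swap (by unfold Xmm; fun_prop)]
  simp_rw [Xmm_swap, mul_left_comm]

lemma ofReal_abs_Fr_le (r s : ℝ) {ρ σ : ℝ} (hρ : 0 ≤ ρ) (hσ : 0 ≤ σ) :
    ENNReal.ofReal |Fr r s ρ σ| ≤ ENNReal.ofReal (2 / Real.pi ^ 2) * angularKernel r s ρ σ := by
  unfold Fr angularKernel
  rw [abs_mul, abs_of_nonneg (by positivity), ENNReal.ofReal_mul (by positivity)]
  gcongr
  rw [← Real.enorm_eq_ofReal_abs, intervalIntegral.integral_of_le Real.pi_pos.le]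
  refine (enorm_integral_le_lintegral_enorm _).trans (lintegral_mono fun θ => ?_)
  rw [intervalIntegral.integral_of_le Real.pi_pos.le]
  refine (enorm_integral_le_lintegral_enorm _).trans (lintegral_mono fun φ => ?_)
  rw [Real.enorm_eq_ofReal_abs, ← ENNReal.ofReal_mul hσ, ← ENNReal.ofReal_mul hρ]
  exact ENNReal.ofReal_le_ofReal (abs_Fr_integrand_le hρ hσ r s θ φ)

lemma ofReal_abs_Fs_le (r s : ℝ) {ρ σ : ℝ} (hρ : 0 ≤ ρ) (hσ : 0 ≤ σ) :
    ENNReal.ofReal |Fs r s ρ σ| ≤ ENNReal.ofReal (2 / Real.pi ^ 2) * angularKernel r s ρ σ := by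
  rw [← angularKernel_swap]
  exact ofReal_abs_Fr_le s r hσ hρ

/-- The sup norm distance is at most the Euclidean distance. -/
lemma inv_sqrt_Xmm_pow_three_le (r s ρ σ θ φ : ℝ) :
    (√(Xmm r s ρ σ θ φ) ^ 3)⁻¹
      ≤ (‖![ρ * Real.cos θ, ρ * Real.sin θ, σ * Real.cos φ, σ * Real.sin φ]
          - ![r, 0, s, 0]‖ ^ 3)⁻¹ := by
  set z : Fin 4 → ℝ := ![ρ * Real.cos θ, ρ * Real.sin θ, σ * Real.cos φ, σ * Real.sin φ]
    - ![r, 0, s, 0] with hz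
  have hX : Xmm r s ρ σ θ φ = z 0 ^ 2 + z 1 ^ 2 + z 2 ^ 2 + z 3 ^ 2 := by
    rw [Xmm_eq_sum_sq]; simp [hz]
  rcases eq_or_ne z 0 with h0 | h0
  · rw [hX, h0]; simp
  have hle : ‖z‖ ≤ √(Xmm r s ρ σ θ φ) := by
    refine (pi_norm_le_iff_of_nonneg (Real.sqrt_nonneg _)).2 fun i => Real.abs_le_sqrt ?_
    rw [hX]
    fin_cases i <;> simp <;>
      linarith [sq_nonneg (z 0), sq_nonneg (z 1), sq_nonneg (z 2), sq_nonneg (z 3)]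
  have := norm_pos_iff.2 h0
  gcongr

lemma lintegral_angularKernel_mul_le (r s : ℝ) {w : ℝ × ℝ → ℝ} (hw : Measurable w) :
    ∫⁻ p in quadrant, angularKernel r s p.1 p.2 * ENNReal.ofReal |w p|
      ≤ ENNReal.ofReal 49 * Lam (fun x => w (rx x, sx x)) := by
  set I := Set.Ioc 0 Real.pi
  set H : (ℝ × ℝ) × (ℝ × ℝ) → ℝ≥0∞ := fun q =>
    ENNReal.ofReal ((‖![q.1.1, q.1.2, q.2.1, q.2.2] - ![r, 0, s, 0]‖ ^ 3)⁻¹)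
      * ENNReal.ofReal |w (√(q.1.1 ^ 2 + q.1.2 ^ 2), √(q.2.1 ^ 2 + q.2.2 ^ 2))| with hH
  have hHm : Measurable H := by
    have h1 : Measurable fun q : (ℝ × ℝ) × (ℝ × ℝ) => ![q.1.1, q.1.2, q.2.1, q.2.2] := by
      refine measurable_pi_iff.2 fun i => ?_
      fin_cases i <;> simp <;> fun_prop
    have h2 : Measurable fun q : (ℝ × ℝ) × (ℝ × ℝ) =>
        |w (√(q.1.1 ^ 2 + q.1.2 ^ 2), √(q.2.1 ^ 2 + q.2.2 ^ 2))| :=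
      (hw.comp (by fun_prop)).abs
    exact (((h1.sub_const _).norm.pow_const 3).inv.ennreal_ofReal).mul h2.ennreal_ofReal
  have hpt : ∀ ρ ∈ Set.Ici (0 : ℝ), ∀ σ ∈ Set.Ici (0 : ℝ),
      angularKernel r s ρ σ * ENNReal.ofReal |w (ρ, σ)|
        ≤ ∫⁻ θ in I, ∫⁻ φ in I, ENNReal.ofReal ρ * (ENNReal.ofReal σ *
          H ((ρ * Real.cos θ, ρ * Real.sin θ), (σ * Real.cos φ, σ * Real.sin φ))) := by
    intro ρ hρ σ hσ
    have hpol : ∀ a t : ℝ, 0 ≤ a → √((a * Real.cos t) ^ 2 + (a * Real.sin t) ^ 2) = a := by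
      intro a t ha
      rw [show (a * Real.cos t) ^ 2 + (a * Real.sin t) ^ 2 = a ^ 2 by
        linear_combination a ^ 2 * Real.sin_sq_add_cos_sq t, Real.sqrt_sq ha]
    unfold angularKernel
    rw [← lintegral_mul_const' _ _ ENNReal.ofReal_ne_top]
    refine lintegral_mono fun θ => ?_
    rw [← lintegral_mul_const' _ _ ENNReal.ofReal_ne_top]
    refine lintegral_mono fun φ => ?_
    simp only [hH, hpol ρ θ hρ, hpol σ φ hσ, mul_assoc]
    exact mul_le_mul' le_rfl (mul_le_mul' le_rfl (mul_le_mul'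
      (ENNReal.ofReal_le_ofReal (inv_sqrt_Xmm_pow_three_le r s ρ σ θ φ)) le_rfl))
  calc ∫⁻ p in quadrant, angularKernel r s p.1 p.2 * ENNReal.ofReal |w p|
      ≤ ∫⁻ p in quadrant, ∫⁻ θ in I, ∫⁻ φ in I, ENNReal.ofReal p.1 * (ENNReal.ofReal p.2 *
          H ((p.1 * Real.cos θ, p.1 * Real.sin θ), (p.2 * Real.cos φ, p.2 * Real.sin φ))) :=
        setLIntegral_mono' (measurableSet_Ici.prod measurableSet_Ici) fun p hp =>
          hpt p.1 hp.1 p.2 hp.2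
    _ = ∫⁻ ρ in Set.Ici (0 : ℝ), ∫⁻ σ in Set.Ici (0 : ℝ), ∫⁻ θ in I, ∫⁻ φ in I,
          ENNReal.ofReal ρ * (ENNReal.ofReal σ *
          H ((ρ * Real.cos θ, ρ * Real.sin θ), (σ * Real.cos φ, σ * Real.sin φ))) := by
        rw [quadrant, Measure.volume_eq_prod, ← Measure.prod_restrict, lintegral_prod]
        refine Measurable.aemeasurable ?_
        refine Measurable.lintegral_prod_right' (f := fun q : (ℝ × ℝ) × ℝ => ∫⁻ φ in I,
          ENNReal.ofReal q.1.1 * (ENNReal.ofReal q.1.2 * H ((q.1.1 * Real.cos q.2,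
            q.1.1 * Real.sin q.2), (q.1.2 * Real.cos φ, q.1.2 * Real.sin φ)))) ?_
        refine Measurable.lintegral_prod_right' (f := fun q : ((ℝ × ℝ) × ℝ) × ℝ =>
          ENNReal.ofReal q.1.1.1 * (ENNReal.ofReal q.1.1.2 * H ((q.1.1.1 * Real.cos q.1.2,
            q.1.1.1 * Real.sin q.1.2), (q.1.1.2 * Real.cos q.2, q.1.1.2 * Real.sin q.2)))) ?_
        fun_prop
    _ = ∫⁻ ρ in Set.Ici (0 : ℝ), ∫⁻ θ in I, ∫⁻ σ in Set.Ici (0 : ℝ), ∫⁻ φ in I,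
          ENNReal.ofReal ρ * (ENNReal.ofReal σ *
          H ((ρ * Real.cos θ, ρ * Real.sin θ), (σ * Real.cos φ, σ * Real.sin φ))) := by
        refine lintegral_congr fun ρ => lintegral_lintegral_swap (Measurable.aemeasurable ?_)
        refine Measurable.lintegral_prod_right' (f := fun q : (ℝ × ℝ) × ℝ =>
          ENNReal.ofReal ρ * (ENNReal.ofReal q.1.1 * H ((ρ * Real.cos q.1.2,
            ρ * Real.sin q.1.2), (q.1.1 * Real.cos q.2, q.1.1 * Real.sin q.2)))) ?_
        fun_prop
    _ = ∫⁻ ρ in Set.Ici (0 : ℝ), ∫⁻ θ in I, ENNReal.ofReal ρ *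
          ∫⁻ σ in Set.Ici (0 : ℝ), ∫⁻ φ in I, ENNReal.ofReal σ *
          H ((ρ * Real.cos θ, ρ * Real.sin θ), (σ * Real.cos φ, σ * Real.sin φ)) := by
        simp_rw [lintegral_const_mul' _ _ (ENNReal.ofReal_ne_top (r := _))]
    _ ≤ ∫⁻ ρ in Set.Ici (0 : ℝ), ∫⁻ θ in I, ENNReal.ofReal ρ *
          ∫⁻ b, H ((ρ * Real.cos θ, ρ * Real.sin θ), b) := by
        gcongr with ρ θ
        exact lintegral_polar_half_le (hHm.comp measurable_prodMk_left)
    _ ≤ ∫⁻ a, ∫⁻ b, H (a, b) :=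
        lintegral_polar_half_le (h := fun a => ∫⁻ b, H (a, b)) hHm.lintegral_prod_right'
    _ = ∫⁻ x : Fin 4 → ℝ, ENNReal.ofReal ((‖x - ![r, 0, s, 0]‖ ^ 3)⁻¹)
          * ENNReal.ofReal |w (rx x, sx x)| := by
        rw [← lintegral_fin_four hHm]
        refine lintegral_congr fun x => ?_
        have hx : ![x 0, x 1, x 2, x 3] = x := by ext i; fin_cases i <;> rfl
        simp only [hH, hx, rx, sx]
    _ ≤ ENNReal.ofReal 49 * Lam (fun x => w (rx x, sx x)) := by
        refine lintegral_inv_norm_sub_pow_three_mul_le _ (hw.comp ?_)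
        unfold rx sx
        fun_prop

/-- A kernel dominated by `angularKernel` maps `Lam` to bounded functions. -/
lemma lintegral_mul_le_of_le_angularKernel {c r s : ℝ} (hc : 0 ≤ c) {F : ℝ → ℝ → ℝ}
    (hF : ∀ ρ σ, 0 ≤ ρ → 0 ≤ σ →
      ENNReal.ofReal |F ρ σ| ≤ ENNReal.ofReal c * angularKernel r s ρ σ)
    {w : ℝ × ℝ → ℝ} (hw : Measurable w) :
    ∫⁻ p in quadrant, ENNReal.ofReal (|F p.1 p.2| * |w p|)
      ≤ ENNReal.ofReal (c * 49) * Lam (fun x => w (rx x, sx x)) := by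
  calc ∫⁻ p in quadrant, ENNReal.ofReal (|F p.1 p.2| * |w p|)
      ≤ ∫⁻ p in quadrant, ENNReal.ofReal c *
          (angularKernel r s p.1 p.2 * ENNReal.ofReal |w p|) := by
        refine setLIntegral_mono' (measurableSet_Ici.prod measurableSet_Ici) fun p hp => ?_
        rw [ENNReal.ofReal_mul (abs_nonneg _), ← mul_assoc]
        gcongr
        exact hF _ _ hp.1 hp.2
    _ ≤ ENNReal.ofReal (c * 49) * Lam (fun x => w (rx x, sx x)) := by
        rw [lintegral_const_mul' _ _ ENNReal.ofReal_ne_top, ENNReal.ofReal_mul hc, mul_assoc]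
        gcongr
        exact lintegral_angularKernel_mul_le r s hw

lemma abs_setIntegral_mul_le {C : ℝ} (hC : 0 ≤ C) {F w : ℝ × ℝ → ℝ} {S : Set (ℝ × ℝ)} {L : ℝ≥0∞}
    (hL : L < ⊤) (h : ∫⁻ p in S, ENNReal.ofReal (|F p| * |w p|) ≤ ENNReal.ofReal C * L) :
    |∫ p in S, F p * w p| ≤ C * L.toReal := by
  have h1 := norm_integral_le_lintegral_norm (μ := volume.restrict S) fun p => F p * w p
  simp only [Real.norm_eq_abs, abs_mul] at h1
  refine h1.trans ?_
  have h2 := ENNReal.toReal_mono (ENNReal.mul_ne_top ENNReal.ofReal_ne_top hL.ne) h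
  rwa [ENNReal.toReal_mul, ENNReal.toReal_ofReal hC] at h2

/-- There is an absolute constant `C > 0` such that for every measurable
`w : Π → ℝ` and every `(r,s) ∈ Π`, `∫∫_Π |F^r| |w| ≤ C Λ(W)` and
`∫∫_Π |F^s| |w| ≤ C Λ(W)`, where `W(x) = w(r_x, s_x)`; in particular, if `Λ(W) < ∞`
then `|u^r[w](r,s)| ≤ C Λ(W)` and `|u^s[w](r,s)| ≤ C Λ(W)`. -/
theorem stmt_9 :
    ∃ C : ℝ, 0 < C ∧
      ∀ (w : ℝ × ℝ → ℝ), Measurable w → ∀ r s : ℝ, 0 ≤ r → 0 ≤ s →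
        (∫⁻ p in quadrant, ENNReal.ofReal (|Fr r s p.1 p.2| * |w p|))
          ≤ ENNReal.ofReal C * Lam (fun x => w (rx x, sx x)) ∧
        (∫⁻ p in quadrant, ENNReal.ofReal (|Fs r s p.1 p.2| * |w p|))
          ≤ ENNReal.ofReal C * Lam (fun x => w (rx x, sx x)) ∧
        (Lam (fun x => w (rx x, sx x)) < ⊤ →
          |uR w r s| ≤ C * (Lam (fun x => w (rx x, sx x))).toReal ∧
          |uS w r s| ≤ C * (Lam (fun x => w (rx x, sx x))).toReal) := by
  have hc : (0 : ℝ) < 2 / Real.pi ^ 2 := by positivity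
  refine ⟨2 / Real.pi ^ 2 * 49, by positivity, fun w hw r s _ _ => ?_⟩
  have hr := lintegral_mul_le_of_le_angularKernel (r := r) (s := s) hc.le
    (F := Fr r s) (fun ρ σ hρ hσ => ofReal_abs_Fr_le r s hρ hσ) hw
  have hs := lintegral_mul_le_of_le_angularKernel (r := r) (s := s) hc.le
    (F := Fs r s) (fun ρ σ hρ hσ => ofReal_abs_Fs_le r s hρ hσ) hw
  refine ⟨hr, hs, fun hL => ⟨?_, ?_⟩⟩
  · rw [uR, abs_neg]
    exact abs_setIntegral_mul_le (F := fun p => Fr r s p.1 p.2) (by positivity) hL hr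
  · exact abs_setIntegral_mul_le (F := fun p => Fs r s p.1 p.2) (by positivity) hL hs
end
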